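/- arXiv:1905.08781 — 4 statements merged into one kernel-verified Lean document; each statement's English description precedes it below -/
import Mathlib

section
/- If (f_n)_{n∈ℕ} is a pointwise nondecreasing sequence of functions X → ℝ ∪ {+∞} converging pointwise to a function f : X → ℝ ∪ {+∞}, then (L f_n) converges pointwise to L f and (U f_n) converges pointwise to U f; that is, the lower and upper transition operators are continuous with respect to nondecreasing sequences of extended real-valued functions. -/
open Filter Topology

variable {X : Type*}

/-- The application of a transition "matrix" `T` to an extended-real-valued
function `f`, `(Tf)(x) = ∑ y, T x y * f y`, with the convention `0 * ⊤ = 0`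
(which is the convention of `EReal` multiplication). -/
noncomputable def matApply [Fintype X] (T : X → X → ℝ) (f : X → EReal) (x : X) : EReal :=
  ∑ y, (T x y : EReal) * f y

/-- `T` is a transition matrix: nonnegative entries, rows summing to one. -/
def IsTransMat [Fintype X] (T : X → X → ℝ) : Prop :=
  (∀ x y, 0 ≤ T x y) ∧ ∀ x, ∑ y, T x y = 1

/-- `𝒯` has separately specified rows. -/
def HasSepRows [Fintype X] (𝒯 : Set (X → X → ℝ)) : Prop :=
  ∀ sel : X → X → X → ℝ, (∀ x, sel x ∈ 𝒯) → ∃ T ∈ 𝒯, ∀ x y, T x y = sel x x y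

/-- The lower transition operator of `𝒯`. -/
noncomputable def lowerOp [Fintype X] (𝒯 : Set (X → X → ℝ)) (f : X → EReal) (x : X) : EReal :=
  ⨅ T ∈ 𝒯, matApply T f x

/-- The upper transition operator of `𝒯`. -/
noncomputable def upperOp [Fintype X] (𝒯 : Set (X → X → ℝ)) (f : X → EReal) (x : X) : EReal :=
  ⨆ T ∈ 𝒯, matApply T f x

/-!
For entrywise nonnegative `T`, the map `f ↦ T f` commutes with suprema of monotone families, so the
upper operator, a supremum of such maps, does so as well. For the lower operator one has to exchange
`⨅ T ∈ 𝒯` with `⨆ i`. If `f > -∞`, then `T ↦ T f` is lower semicontinuous on nonnegative matrices,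
so for every `c < ⨅ T ∈ 𝒯, ⨆ i, T (f i)` the sets `{T | c < T (f i)}` form a directed family of
relatively open sets covering the compact set `𝒯`; hence a single one of them contains `𝒯`.
-/

section MinMax

variable {α β ι : Type*} [TopologicalSpace α] [CompleteLinearOrder β] [DenselyOrdered β]
  [Preorder ι] [IsDirectedOrder ι] [Nonempty ι]

theorem biInf_iSup_comm_of_isCompact {s : Set α} (hs : IsCompact s)
    {F : ι → α → β} (hF : ∀ i, LowerSemicontinuousOn (F i) s)
    (hmono : ∀ a ∈ s, Monotone fun i => F i a) :
    ⨅ a ∈ s, ⨆ i, F i a = ⨆ i, ⨅ a ∈ s, F i a := by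
  refine le_antisymm (le_of_forall_lt_imp_le_of_dense fun c hc => ?_)
    (iSup_le fun i => iInf₂_mono fun a _ => le_iSup (F · a) i)
  have hempty : s ∩ ⋂ i ∈ Set.univ, F i ⁻¹' Set.Iic c = ∅ := by
    refine Set.eq_empty_of_forall_notMem fun a ⟨ha, hac⟩ => ?_
    obtain ⟨i, hi⟩ := lt_iSup_iff.1 (hc.trans_le (iInf₂_le a ha))
    exact (Set.mem_iInter₂.1 hac i trivial).not_gt hi
  obtain ⟨u, hu⟩ :=
    (LowerSemicontinuousOn.inter_biInter_preimage_Iic_eq_empty_iff_exists_finset hs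
      fun i _ => hF i).1 hempty
  obtain ⟨k, hk⟩ := (u.map (Function.Embedding.subtype _)).exists_le
  refine le_iSup_of_le k (le_iInf₂ fun a ha => ?_)
  obtain ⟨i, hiu, hi⟩ := hu a ha
  exact hi.le.trans (hmono a ha (hk i (Finset.mem_map_of_mem _ hiu)))

end MinMax

section EReal

variable {ι : Type*}

theorem ereal_coe_mul_iSup {c : ℝ} (hc : 0 ≤ c) [Nonempty ι] (u : ι → EReal) :
    (c : EReal) * ⨆ i, u i = ⨆ i, (c : EReal) * u i := by
  obtain rfl | hpos := hc.eq_or_lt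
  · simp
  have hcont : ContinuousAt ((c : EReal) * ·) (⨆ i, u i) :=
    EReal.Tendsto.const_mul tendsto_id (.inl (EReal.coe_ne_bot c)) (.inl (EReal.coe_ne_top c))
  exact Monotone.map_iSup_of_continuousAt hcont
    (fun _ _ h => mul_le_mul_of_nonneg_left h (EReal.coe_nonneg.2 hc))
    (EReal.coe_mul_bot_of_pos hpos)

theorem ereal_iSup_add_iSup_of_monotone [Preorder ι] [IsDirectedOrder ι] [Nonempty ι]
    {u v : ι → EReal} (hu : Monotone u) (hv : Monotone v) :
    (⨆ i, u i) + ⨆ i, v i = ⨆ i, (u i + v i) := by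
  refine le_antisymm (le_of_forall_lt fun c hc => ?_) EReal.iSup_add_le_add_iSup
  have hlim := (tendsto_atTop_iSup hu).prodMk_nhds (tendsto_atTop_iSup hv)
  obtain ⟨i, hi⟩ := (hlim.eventually (EReal.lowerSemicontinuous_add _ c hc)).exists
  exact hi.trans_le (le_iSup (fun i => u i + v i) i)

theorem ereal_finsetSum_iSup_of_monotone [Preorder ι] [IsDirectedOrder ι] [Nonempty ι]
    {κ : Type*} (s : Finset κ) {u : κ → ι → EReal} (hu : ∀ k, Monotone (u k)) :
    ∑ k ∈ s, ⨆ i, u k i = ⨆ i, ∑ k ∈ s, u k i := by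
  induction s using Finset.cons_induction with
  | empty => simp
  | cons k s _ ih =>
    simp only [Finset.sum_cons, ih]
    exact ereal_iSup_add_iSup_of_monotone (hu k) fun _ _ hij =>
      Finset.sum_le_sum fun l _ => hu l hij

variable {α : Type*} [TopologicalSpace α] {s : Set α}

theorem ereal_lowerSemicontinuousOn_add {u v : α → EReal} (hu : LowerSemicontinuousOn u s)
    (hv : LowerSemicontinuousOn v s) : LowerSemicontinuousOn (fun a => u a + v a) s := by
  intro a ha
  by_cases hbot : u a + v a = ⊥
  · exact fun c hc => absurd (hc.trans_eq hbot) not_lt_bot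
  · obtain ⟨hua, hva⟩ := EReal.add_ne_bot_iff.1 hbot
    exact LowerSemicontinuousWithinAt.add' (hu a ha) (hv a ha)
      (EReal.continuousAt_add (.inr hva) (.inl hua))

theorem ereal_lowerSemicontinuousOn_sum {κ : Type*} (t : Finset κ) {u : κ → α → EReal}
    (hu : ∀ k, LowerSemicontinuousOn (u k) s) :
    LowerSemicontinuousOn (fun a => ∑ k ∈ t, u k a) s := by
  induction t using Finset.cons_induction with
  | empty => simpa only [Finset.sum_empty] using lowerSemicontinuousOn_const
  | cons k t _ ih =>
    simp only [Finset.sum_cons]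
    exact ereal_lowerSemicontinuousOn_add (hu k) ih

theorem ereal_lowerSemicontinuousOn_coe_mul_const {b : EReal} (hb : b ≠ ⊥) :
    LowerSemicontinuousOn (fun c : ℝ => (c : EReal) * b) (Set.Ici 0) := by
  intro c _
  by_cases hmin : c = 0 ∧ b = ⊤
  · -- `c ↦ c * ⊤` is discontinuous at `0`, but takes its minimum on `Set.Ici 0` there.
    obtain ⟨rfl, rfl⟩ := hmin
    intro r hr
    filter_upwards [self_mem_nhdsWithin] with d hd
    calc r < ((0 : ℝ) : EReal) * ⊤ := hr
      _ ≤ (d : EReal) * ⊤ :=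
        mul_le_mul_of_nonneg_right (EReal.coe_le_coe_iff.2 hd) le_top
  · have hcont : ContinuousAt (fun d : ℝ => (d : EReal) * b) c :=
      EReal.Tendsto.mul_const continuous_coe_real_ereal.continuousAt
        (.inr hb) ((not_and_or.1 hmin).imp_left EReal.coe_ne_zero.2)
    exact hcont.lowerSemicontinuousAt.lowerSemicontinuousWithinAt _

end EReal

section TransitionOperators

variable [Fintype X]

theorem matApply_mono {T : X → X → ℝ} (hT : 0 ≤ T) {f g : X → EReal} (hfg : f ≤ g) (x : X) :
    matApply T f x ≤ matApply T g x :=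
  Finset.sum_le_sum fun y _ =>
    mul_le_mul_of_nonneg_left (hfg y) (EReal.coe_nonneg.2 (hT x y))

theorem lowerOp_mono {𝒯 : Set (X → X → ℝ)} (hnonneg : ∀ T ∈ 𝒯, 0 ≤ T) {f g : X → EReal}
    (hfg : f ≤ g) (x : X) : lowerOp 𝒯 f x ≤ lowerOp 𝒯 g x :=
  iInf₂_mono fun T hT => matApply_mono (hnonneg T hT) hfg x

theorem upperOp_mono {𝒯 : Set (X → X → ℝ)} (hnonneg : ∀ T ∈ 𝒯, 0 ≤ T) {f g : X → EReal}
    (hfg : f ≤ g) (x : X) : upperOp 𝒯 f x ≤ upperOp 𝒯 g x :=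
  iSup₂_mono fun T hT => matApply_mono (hnonneg T hT) hfg x

theorem lowerSemicontinuousOn_matApply {f : X → EReal} (hf : ∀ y, f y ≠ ⊥) (x : X) :
    LowerSemicontinuousOn (fun T : X → X → ℝ => matApply T f x) (Set.Ici 0) :=
  ereal_lowerSemicontinuousOn_sum _ fun y =>
    (ereal_lowerSemicontinuousOn_coe_mul_const (hf y)).comp
      (by fun_prop : Continuous fun T : X → X → ℝ => T x y).continuousOn fun _ hT => hT x y

theorem isCompact_of_forall_isTransMat {𝒯 : Set (X → X → ℝ)} (hmem : ∀ T ∈ 𝒯, IsTransMat T)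
    (hcl : IsClosed 𝒯) : IsCompact 𝒯 := by
  refine (isCompact_Icc (a := (0 : X → X → ℝ)) (b := 1)).of_isClosed_subset hcl fun T hT => ?_
  obtain ⟨hnonneg, hsum⟩ := hmem T hT
  refine ⟨hnonneg, fun x y => ?_⟩
  calc T x y ≤ ∑ z, T x z := Finset.single_le_sum (fun z _ => hnonneg x z) (Finset.mem_univ y)
    _ = 1 := hsum x

section Monotone

variable {ι : Type*} [Preorder ι] [IsDirectedOrder ι] [Nonempty ι]
  {𝒯 : Set (X → X → ℝ)} {f : ι → X → EReal}

theorem matApply_iSup {T : X → X → ℝ} (hT : 0 ≤ T) (hf : Monotone f) (x : X) :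
    matApply T (⨆ i, f i) x = ⨆ i, matApply T (f i) x := by
  simp only [matApply, iSup_apply, ereal_coe_mul_iSup (hT x _)]
  exact ereal_finsetSum_iSup_of_monotone _ fun y _ _ hij =>
    mul_le_mul_of_nonneg_left (hf hij y) (EReal.coe_nonneg.2 (hT x y))

theorem upperOp_iSup (hnonneg : ∀ T ∈ 𝒯, 0 ≤ T) (hf : Monotone f) (x : X) :
    upperOp 𝒯 (⨆ i, f i) x = ⨆ i, upperOp 𝒯 (f i) x :=
  calc ⨆ T ∈ 𝒯, matApply T (⨆ i, f i) x
    _ = ⨆ T ∈ 𝒯, ⨆ i, matApply T (f i) x :=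
      biSup_congr fun T hT => matApply_iSup (hnonneg T hT) hf x
    _ = ⨆ i, ⨆ T ∈ 𝒯, matApply T (f i) x := by simp only [iSup_comm (ι' := ι)]

theorem lowerOp_iSup (hnonneg : ∀ T ∈ 𝒯, 0 ≤ T) (hcomp : IsCompact 𝒯)
    (hfbot : ∀ i y, f i y ≠ ⊥) (hf : Monotone f) (x : X) :
    lowerOp 𝒯 (⨆ i, f i) x = ⨆ i, lowerOp 𝒯 (f i) x :=
  calc ⨅ T ∈ 𝒯, matApply T (⨆ i, f i) x
    _ = ⨅ T ∈ 𝒯, ⨆ i, matApply T (f i) x :=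
      biInf_congr fun T hT => matApply_iSup (hnonneg T hT) hf x
    _ = ⨆ i, ⨅ T ∈ 𝒯, matApply T (f i) x :=
      biInf_iSup_comm_of_isCompact hcomp
        (fun i => (lowerSemicontinuousOn_matApply (hfbot i) x).mono hnonneg)
        fun T hT _ _ hij => matApply_mono (hnonneg T hT) (hf hij) x

theorem lowerOp_upperOp_monotone_continuity_general (hnonneg : ∀ T ∈ 𝒯, 0 ≤ T)
    (hcomp : IsCompact 𝒯) (hfbot : ∀ i x, f i x ≠ ⊥) (hmono : Monotone f) {g : X → EReal}
    (hlim : ∀ x, Tendsto (fun i => f i x) atTop (𝓝 (g x))) :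
    (∀ x, Tendsto (fun i => lowerOp 𝒯 (f i) x) atTop (𝓝 (lowerOp 𝒯 g x))) ∧
    (∀ x, Tendsto (fun i => upperOp 𝒯 (f i) x) atTop (𝓝 (upperOp 𝒯 g x))) := by
  obtain rfl : g = ⨆ i, f i :=
    tendsto_nhds_unique (tendsto_pi_nhds.2 hlim) (tendsto_atTop_iSup hmono)
  refine ⟨fun x => ?_, fun x => ?_⟩
  · rw [lowerOp_iSup hnonneg hcomp hfbot hmono]
    exact tendsto_atTop_iSup fun i j hij => lowerOp_mono hnonneg (hmono hij) x
  · rw [upperOp_iSup hnonneg hmono]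
    exact tendsto_atTop_iSup fun i j hij => upperOp_mono hnonneg (hmono hij) x

end Monotone

end TransitionOperators

/-- The lower and upper transition operators are continuous with respect to pointwise
nondecreasing sequences of functions `X → ℝ ∪ {+∞}`. -/
theorem lowerOp_upperOp_monotone_continuity [Fintype X] [Nonempty X]
    (𝒯 : Set (X → X → ℝ))
    (hmem : ∀ T ∈ 𝒯, IsTransMat T) (hne : 𝒯.Nonempty) (hcl : IsClosed 𝒯)
    (hcv : Convex ℝ 𝒯) (hsep : HasSepRows 𝒯)
    (f : ℕ → X → EReal) (hfbot : ∀ n x, f n x ≠ ⊥)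
    (hmono : ∀ x, Monotone fun n => f n x)
    (g : X → EReal) (hgbot : ∀ x, g x ≠ ⊥)
    (hlim : ∀ x, Tendsto (fun n => f n x) atTop (𝓝 (g x))) :
    (∀ x, Tendsto (fun n => lowerOp 𝒯 (f n) x) atTop (𝓝 (lowerOp 𝒯 g x))) ∧
    (∀ x, Tendsto (fun n => upperOp 𝒯 (f n) x) atTop (𝓝 (upperOp 𝒯 g x))) :=
  lowerOp_upperOp_monotone_continuity_general (fun T hT => (hmem T hT).1)
    (isCompact_of_forall_isTransMat hmem hcl) hfbot (fun _ _ hmn x => hmono x hmn) hlim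
end

section
/- There exists a single transition matrix T ∈ 𝒯 such that, for every x ∈ X, the limit lim_{n→∞} h_T^n(x) exists in [0,+∞] and equals hup*(x), where hup* := lim_{n→∞} hup^n; that is, the upper expected hitting time of the imprecise Markov chain is attained by one homogeneous (precise) transition matrix compatible with 𝒯. -/
open Filter Topology

variable {X : Type*}

/-- The `{0,1}`-indicator of a set `B ⊆ X`, as an extended-real-valued function. -/
noncomputable def indE (B : Set X) : X → EReal := fun x => Set.indicator B 1 x

/-- The lower hitting-time iterates: `hlow⁰ = 1_{Aᶜ}`,
`hlowⁿ⁺¹ = 1_{Aᶜ} + 1_{Aᶜ} · (L hlowⁿ)`. -/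
noncomputable def hlowIter [Fintype X] (𝒯 : Set (X → X → ℝ)) (A : Set X) : ℕ → X → EReal
  | 0 => indE Aᶜ
  | n + 1 => fun x => indE Aᶜ x + indE Aᶜ x * lowerOp 𝒯 (hlowIter 𝒯 A n) x

/-- The upper hitting-time iterates: `hup⁰ = 1_{Aᶜ}`,
`hupⁿ⁺¹ = 1_{Aᶜ} + 1_{Aᶜ} · (U hupⁿ)`. -/
noncomputable def hupIter [Fintype X] (𝒯 : Set (X → X → ℝ)) (A : Set X) : ℕ → X → EReal
  | 0 => indE Aᶜ
  | n + 1 => fun x => indE Aᶜ x + indE Aᶜ x * upperOp 𝒯 (hupIter 𝒯 A n) x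
/-- The hitting-time iterates for a single (precise) transition matrix `T`:
`h_T⁰ = 1_{Aᶜ}`, `h_Tⁿ⁺¹ = 1_{Aᶜ} + 1_{Aᶜ} · (T h_Tⁿ)`; their pointwise limit is the
expected hitting time of `A` for the homogeneous Markov chain with transition matrix `T`. -/
noncomputable def hPrecIter [Fintype X] (T : X → X → ℝ) (A : Set X) : ℕ → X → EReal
  | 0 => indE Aᶜ
  | n + 1 => fun x => indE Aᶜ x + indE Aᶜ x * matApply T (hPrecIter T A n) x

/-!
Let `G` be a largest subset of `Aᶜ` for which some `S ∈ 𝒯` has an infinite expected exit time from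
every state of `G`. By maximality no `T ∈ 𝒯` leads from `(A ∪ G)ᶜ` into `G` or has a nonempty
absorbing set inside `(A ∪ G)ᶜ`. The latter makes `u = 0` the only nonnegative solution of
`u ≤ 1_{(A ∪ G)ᶜ} · (T u)`, and by compactness of `𝒯` this holds with a uniform margin, so the upper
iterates stay bounded off `G` and converge there to a finite `f`. A matrix `O ∈ 𝒯` that attains the
upper operator at `f` has `f` as its own expected hitting time of `A ∪ G`, and using the rows of `S`
on `G` and those of `O` elsewhere gives the required matrix.
-/

section RealOperators

variable [Fintype X] {𝒯 : Set (X → X → ℝ)} {T : X → X → ℝ}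

/-- The action of a matrix on real-valued functions, the finite part of `matApply`. -/
def matApplyReal (T : X → X → ℝ) (f : X → ℝ) : X → ℝ :=
  fun x => T x ⬝ᵥ f

/-- The upper transition operator on real-valued functions, the finite part of `upperOp`.
The `sSup` is meaningful when `𝒯` is nonempty and compact, see `isGreatest_upperOpReal`. -/
noncomputable def upperOpReal (𝒯 : Set (X → X → ℝ)) (f : X → ℝ) : X → ℝ :=
  fun x => sSup ((fun T => matApplyReal T f x) '' 𝒯)

lemma matApplyReal_zero (T : X → X → ℝ) : matApplyReal T 0 = 0 :=
  funext fun x => dotProduct_zero (T x)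

lemma upperOpReal_zero (hne : 𝒯.Nonempty) : upperOpReal 𝒯 0 = 0 := by
  funext x
  simp [upperOpReal, matApplyReal_zero, hne.image_const]

lemma monotone_matApplyReal (hT : 0 ≤ T) : Monotone (matApplyReal T) :=
  fun _ _ hfg x => dotProduct_le_dotProduct_of_nonneg_left hfg (hT x)

lemma continuous_matApplyReal (T : X → X → ℝ) : Continuous (matApplyReal T) := by
  unfold matApplyReal dotProduct
  fun_prop

lemma eqOn_matApplyReal {f g : X → ℝ} {s G : Set X} (hs : ∀ x ∈ s, ∀ y ∈ G, T x y = 0)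
    (hfg : Set.EqOn f g Gᶜ) : Set.EqOn (matApplyReal T f) (matApplyReal T g) s := by
  refine fun x hx => Finset.sum_congr rfl fun y _ => ?_
  by_cases hy : y ∈ G
  · simp [hs x hx y hy]
  · rw [hfg hy]

lemma eqOn_upperOpReal {f g : X → ℝ} {s G : Set X} (hs : ∀ T ∈ 𝒯, ∀ x ∈ s, ∀ y ∈ G, T x y = 0)
    (hfg : Set.EqOn f g Gᶜ) : Set.EqOn (upperOpReal 𝒯 f) (upperOpReal 𝒯 g) s :=
  fun _ hx => congrArg sSup (Set.image_congr fun T hT => eqOn_matApplyReal (hs T hT) hfg hx)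

lemma isGreatest_upperOpReal (hc : IsCompact 𝒯) (hne : 𝒯.Nonempty) (f : X → ℝ) (x : X) :
    IsGreatest ((fun T => matApplyReal T f x) '' 𝒯) (upperOpReal 𝒯 f x) := by
  have hcont : Continuous fun T : X → X → ℝ => matApplyReal T f x := by
    unfold matApplyReal dotProduct
    fun_prop
  exact (hc.image hcont).isGreatest_sSup (hne.image _)

lemma matApplyReal_le_upperOpReal (hc : IsCompact 𝒯) (hT : T ∈ 𝒯) :
    matApplyReal T ≤ upperOpReal 𝒯 :=
  fun f x => (isGreatest_upperOpReal hc ⟨T, hT⟩ f x).2 ⟨T, hT, rfl⟩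

lemma monotone_upperOpReal (hc : IsCompact 𝒯) (hne : 𝒯.Nonempty) (hnn : ∀ T ∈ 𝒯, 0 ≤ T) :
    Monotone (upperOpReal 𝒯) := by
  intro f g hfg x
  obtain ⟨T, hT, hTf⟩ := (isGreatest_upperOpReal hc hne f x).1
  calc upperOpReal 𝒯 f x = matApplyReal T f x := hTf.symm
    _ ≤ matApplyReal T g x := monotone_matApplyReal (hnn T hT) hfg x
    _ ≤ upperOpReal 𝒯 g x := matApplyReal_le_upperOpReal hc hT g x

lemma exists_matApplyReal_eq_upperOpReal (hc : IsCompact 𝒯) (hne : 𝒯.Nonempty)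
    (hsep : HasSepRows 𝒯) (f : X → ℝ) : ∃ T ∈ 𝒯, matApplyReal T f = upperOpReal 𝒯 f := by
  choose row hrow hmax using fun x => (isGreatest_upperOpReal hc hne f x).1
  obtain ⟨T, hT, hTrow⟩ := hsep row hrow
  refine ⟨T, hT, funext fun x => ?_⟩
  rw [← hmax x, matApplyReal, funext (hTrow x)]
  rfl

lemma matApply_coe (T : X → X → ℝ) (f : X → ℝ) (x : X) :
    matApply T (fun y => (f y : EReal)) x = (matApplyReal T f x : EReal) := by
  let coeHom : ℝ →+ EReal := ⟨⟨Real.toEReal, EReal.coe_zero⟩, EReal.coe_add⟩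
  exact (map_sum coeHom (fun y => T x y * f y) Finset.univ).symm

lemma upperOp_coe (hc : IsCompact 𝒯) (hne : 𝒯.Nonempty) (f : X → ℝ) (x : X) :
    upperOp 𝒯 (fun y => (f y : EReal)) x = (upperOpReal 𝒯 f x : EReal) := by
  simp only [upperOp, matApply_coe]
  apply le_antisymm
  · exact iSup₂_le fun T hT => EReal.coe_le_coe_iff.2 (matApplyReal_le_upperOpReal hc hT f x)
  · obtain ⟨T, hT, hTf⟩ := (isGreatest_upperOpReal hc hne f x).1
    rw [← hTf]
    exact le_iSup₂ (f := fun T (_ : T ∈ 𝒯) => (matApplyReal T f x : EReal)) T hT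

end RealOperators

section TransitionMatrices

variable [Fintype X] {𝒯 : Set (X → X → ℝ)} {T : X → X → ℝ}

lemma IsTransMat.eq_zero_of_le_matApplyReal (hT : IsTransMat T) {v : X → ℝ} {c : ℝ} {x y : X}
    (hv : ∀ z, v z ≤ c) (hx : c ≤ matApplyReal T v x) (hy : v y ≠ c) : T x y = 0 := by
  have hnn : ∀ z ∈ Finset.univ, 0 ≤ T x z * (c - v z) := fun z _ =>
    mul_nonneg (hT.1 x z) (sub_nonneg.2 (hv z))
  have hsum : ∑ z, T x z * (c - v z) = c - matApplyReal T v x := by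
    simp only [mul_sub, Finset.sum_sub_distrib, ← Finset.sum_mul, hT.2 x, one_mul]
    rfl
  have hzero : ∑ z, T x z * (c - v z) = 0 :=
    le_antisymm (by linarith) (Finset.sum_nonneg hnn)
  have hyc := (Finset.sum_eq_zero_iff_of_nonneg hnn).1 hzero y (Finset.mem_univ y)
  exact (mul_eq_zero.1 hyc).resolve_right (sub_ne_zero.2 hy.symm)

lemma isCompact_of_isTransMat (hcl : IsClosed 𝒯) (hmem : ∀ T ∈ 𝒯, IsTransMat T) :
    IsCompact 𝒯 :=
  (isCompact_univ_pi fun _ : X => isCompact_stdSimplex ℝ X).of_isClosed_subset hcl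
    fun T hT x _ => ⟨(hmem T hT).1 x, (hmem T hT).2 x⟩

open Classical in
lemma HasSepRows.piecewise_mem (hsep : HasSepRows 𝒯) (G : Set X) {S T : X → X → ℝ}
    (hS : S ∈ 𝒯) (hT : T ∈ 𝒯) : G.piecewise S T ∈ 𝒯 := by
  obtain ⟨R, hR, hrow⟩ := hsep (fun x => if x ∈ G then S else T)
    fun x => by split_ifs; exacts [hS, hT]
  convert hR using 1
  ext x y
  by_cases hx : x ∈ G <;> simp [hrow, hx]

end TransitionMatrices

section HittingIterates

variable {A G : Set X} {Φ Ψ : (X → ℝ) → X → ℝ}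

/-- One step of the hitting-time recursion of `A` driven by the operator `Φ`, in either case
`Φ = matApplyReal T` or `Φ = upperOpReal 𝒯`. -/
noncomputable def hitStep (A : Set X) (Φ : (X → ℝ) → X → ℝ) (f : X → ℝ) : X → ℝ :=
  Aᶜ.indicator (1 + Φ f)

/-- The real hitting-time iterates, for a single matrix the expectation of `min τ n` with `τ` the
hitting time of `A`. They start from `0` instead of `1_{Aᶜ}`, so that `hitIter A Φ (n + 1)`
corresponds to `hPrecIter` and `hupIter` at `n`. -/
noncomputable def hitIter (A : Set X) (Φ : (X → ℝ) → X → ℝ) (n : ℕ) : X → ℝ :=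
  (hitStep A Φ)^[n] 0

lemma hitStep_of_mem {x : X} (hx : x ∈ A) (f : X → ℝ) : hitStep A Φ f x = 0 :=
  Set.indicator_of_notMem (Set.notMem_compl_iff.2 hx) _

lemma hitStep_of_notMem {x : X} (hx : x ∉ A) (f : X → ℝ) : hitStep A Φ f x = 1 + Φ f x :=
  Set.indicator_of_mem hx _

lemma hitStep_congr {f g : X → ℝ} (h : Set.EqOn (Φ f) (Ψ g) Aᶜ) :
    hitStep A Φ f = hitStep A Ψ g :=
  Set.indicator_congr fun _ hx => congrArg (1 + ·) (h hx)

lemma hitStep_mono_left (h : Φ ≤ Ψ) : hitStep A Φ ≤ hitStep A Ψ :=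
  fun f => Set.indicator_mono (add_le_add_right (h f) 1)

lemma monotone_hitStep (hΦ : Monotone Φ) : Monotone (hitStep A Φ) :=
  fun _ _ hfg => Set.indicator_mono (add_le_add_right (hΦ hfg) 1)

lemma continuous_hitStep (hΦ : Continuous Φ) : Continuous (hitStep A Φ) := by
  refine continuous_pi fun x => ?_
  by_cases hx : x ∈ A
  · simpa only [hitStep_of_mem hx] using continuous_const
  · simp only [hitStep_of_notMem hx]
    fun_prop

lemma hitIter_succ (n : ℕ) : hitIter A Φ (n + 1) = hitStep A Φ (hitIter A Φ n) :=
  Function.iterate_succ_apply' _ _ _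

lemma hitIter_mono_left (hΦ : Monotone Φ) (h : Φ ≤ Ψ) (n : ℕ) :
    hitIter A Φ n ≤ hitIter A Ψ n :=
  (monotone_hitStep hΦ).iterate_le_of_le (hitStep_mono_left h) n 0

lemma monotone_hitIter (hΦ : Monotone Φ) (h0 : Φ 0 = 0) : Monotone (hitIter A Φ) := by
  refine (monotone_hitStep hΦ).monotone_iterate_of_le_map ?_
  rw [hitStep, h0, add_zero]
  exact Set.indicator_nonneg fun _ _ => zero_le_one

lemma hitIter_nonneg (hΦ : Monotone Φ) (h0 : Φ 0 = 0) (n : ℕ) : 0 ≤ hitIter A Φ n :=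
  monotone_hitIter hΦ h0 n.zero_le

lemma hitIter_union_eqOn
    (hΦ : ∀ f g, Set.EqOn f g Gᶜ → Set.EqOn (Φ f) (Φ g) (A ∪ G)ᶜ) (n : ℕ) :
    Set.EqOn (hitIter (A ∪ G) Φ n) (hitIter A Φ n) Gᶜ := by
  induction n with
  | zero => exact fun _ _ => rfl
  | succ n ih =>
    intro x hx
    rw [hitIter_succ, hitIter_succ]
    by_cases hxA : x ∈ A
    · rw [hitStep_of_mem (Set.mem_union_left G hxA), hitStep_of_mem hxA]
    · have hxAG : x ∉ A ∪ G := not_or.2 ⟨hxA, hx⟩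
      rw [hitStep_of_notMem hxAG, hitStep_of_notMem hxA, hΦ _ _ ih hxAG]

lemma exists_tendsto_hitIter (hΦ : Monotone Φ) (h0 : Φ 0 = 0) {M : ℝ}
    (hM : ∀ n x, hitIter A Φ n x ≤ M) : ∃ f, Tendsto (hitIter A Φ) atTop (𝓝 f) :=
  ⟨_, tendsto_atTop_ciSup (monotone_hitIter hΦ h0)
    ⟨fun _ => M, Set.forall_mem_range.2 fun n x => hM n x⟩⟩

lemma tendsto_hitIter_of_union {f : X → ℝ}
    (hΦ : ∀ u v, Set.EqOn u v Gᶜ → Set.EqOn (Φ u) (Φ v) (A ∪ G)ᶜ)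
    (hf : Tendsto (hitIter (A ∪ G) Φ) atTop (𝓝 f)) {x : X} (hx : x ∉ G) :
    Tendsto (fun n => hitIter A Φ n x) atTop (𝓝 (f x)) :=
  (tendsto_pi_nhds.1 hf x).congr fun n => hitIter_union_eqOn hΦ n hx

open Classical in
lemma tendsto_coe_hitIter_piecewise_top {f : X → ℝ}
    (hΦ : ∀ u v, Set.EqOn u v Gᶜ → Set.EqOn (Φ u) (Φ v) (A ∪ G)ᶜ)
    (hf : Tendsto (hitIter (A ∪ G) Φ) atTop (𝓝 f))
    (htop : ∀ x ∈ G, Tendsto (fun n => hitIter A Φ n x) atTop atTop) (x : X) :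
    Tendsto (fun n => (hitIter A Φ n x : EReal)) atTop
      (𝓝 (G.piecewise (fun _ => ⊤) (fun y => (f y : EReal)) x)) := by
  by_cases hx : x ∈ G
  · rw [Set.piecewise_eq_of_mem _ _ _ hx]
    exact EReal.tendsto_coe_nhds_top_iff.2 (htop x hx)
  · rw [Set.piecewise_eq_of_notMem _ _ _ hx]
    exact EReal.tendsto_coe.2 (tendsto_hitIter_of_union hΦ hf hx)

lemma indE_add_indE_mul_coe (A : Set X) (f : X → ℝ) (x : X) :
    indE Aᶜ x + indE Aᶜ x * (f x : EReal) = (Aᶜ.indicator (1 + f) x : ℝ) := by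
  by_cases hx : x ∈ A <;> simp [indE, hx]

lemma indE_eq_coe_hitIter_one (h0 : Φ 0 = 0) :
    indE Aᶜ = fun x => (hitIter A Φ 1 x : EReal) := by
  funext x
  by_cases hx : x ∈ A <;> simp [indE, hitIter, hitStep, h0, hx]

variable [Fintype X]

lemma hPrecIter_eq_coe_hitIter (T : X → X → ℝ) (A : Set X) (n : ℕ) :
    hPrecIter T A n = fun x => (hitIter A (matApplyReal T) (n + 1) x : EReal) := by
  induction n with
  | zero => exact indE_eq_coe_hitIter_one (matApplyReal_zero T)
  | succ n ih =>
    funext x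
    simp only [hPrecIter, ih, matApply_coe, indE_add_indE_mul_coe, hitIter_succ (n + 1), hitStep]

lemma hupIter_eq_coe_hitIter {𝒯 : Set (X → X → ℝ)} (hc : IsCompact 𝒯) (hne : 𝒯.Nonempty)
    (A : Set X) (n : ℕ) :
    hupIter 𝒯 A n = fun x => (hitIter A (upperOpReal 𝒯) (n + 1) x : EReal) := by
  induction n with
  | zero => exact indE_eq_coe_hitIter_one (upperOpReal_zero hne)
  | succ n ih =>
    funext x
    simp only [hupIter, ih, upperOp_coe hc hne, indE_add_indE_mul_coe, hitIter_succ (n + 1),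
      hitStep]

end HittingIterates

section MaximumPrinciple

variable [Fintype X] {𝒯 : Set (X → X → ℝ)} {T : X → X → ℝ} {B : Set X}

/-- `K` is absorbing for `T`: the chain never leaves `K`. -/
def IsAbsorbing (T : X → X → ℝ) (K : Set X) : Prop :=
  ∀ x ∈ K, ∀ y ∉ K, T x y = 0

/-- Every nonempty absorbing set of `T` meets `B`. For a transition matrix on a finite set this says
that the chain hits `B` almost surely from every state. -/
def IsUnavoidable (T : X → X → ℝ) (B : Set X) : Prop :=
  ∀ K : Set X, K.Nonempty → IsAbsorbing T K → (K ∩ B).Nonempty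

/-- The maximum principle: the set where `v` is maximal would be absorbing. -/
lemma IsUnavoidable.nonpos (hB : IsUnavoidable T B) (hT : IsTransMat T) {v : X → ℝ}
    (hv : v ≤ Bᶜ.indicator (matApplyReal T v)) : v ≤ 0 := by
  intro x
  have : Nonempty X := ⟨x⟩
  obtain ⟨m, hm⟩ := Finite.exists_max v
  refine (hm x).trans (not_lt.1 fun hpos : 0 < v m => ?_)
  have hmaxB : ∀ z, v z = v m → z ∉ B := by
    intro z hz hzB
    have hvz := hv z
    rw [Set.indicator_of_notMem (Set.notMem_compl_iff.2 hzB)] at hvz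
    linarith
  have habs : IsAbsorbing T {z | v z = v m} := by
    intro z (hz : v z = v m) y hy
    have hvz := hv z
    rw [Set.indicator_of_mem (hmaxB z hz), hz] at hvz
    exact hT.eq_zero_of_le_matApplyReal hm hvz hy
  obtain ⟨z, hz, hzB⟩ := hB {z | v z = v m} ⟨m, rfl⟩ habs
  exact hmaxB z hz hzB

lemma IsUnavoidable.le_of_le_hitStep (hB : IsUnavoidable T B) (hT : IsTransMat T) {f g : X → ℝ}
    (hf : f ≤ hitStep B (matApplyReal T) f) (hg : hitStep B (matApplyReal T) g ≤ g) : f ≤ g := by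
  refine sub_nonpos.1 (hB.nonpos hT ?_)
  have hsub : matApplyReal T (f - g) = matApplyReal T f - matApplyReal T g :=
    funext fun x => dotProduct_sub (T x) f g
  calc f - g ≤ hitStep B (matApplyReal T) f - hitStep B (matApplyReal T) g := sub_le_sub hf hg
    _ = Bᶜ.indicator (matApplyReal T (f - g)) := by
      rw [hitStep, hitStep, ← Set.indicator_sub', add_sub_add_left_eq_sub, hsub]

/-- The amount by which `v` fails to satisfy the hypothesis of the maximum principle
`IsUnavoidable.nonpos`. -/
noncomputable def excess (B : Set X) (T : X → X → ℝ) (v : X → ℝ) : ℝ :=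
  ∑ x, max (v x - Bᶜ.indicator (matApplyReal T v) x) 0

lemma continuous_excess (B : Set X) :
    Continuous fun p : (X → ℝ) × (X → X → ℝ) => excess B p.2 p.1 := by
  refine continuous_finsetSum _ fun x _ => Continuous.max ?_ continuous_const
  by_cases hx : x ∈ B
  · simp only [Set.indicator_of_notMem (Set.notMem_compl_iff.2 hx)]
    fun_prop
  · simp only [Set.indicator_of_mem (Set.mem_compl hx), matApplyReal, dotProduct]
    fun_prop

lemma excess_smul {s : ℝ} (hs : 0 ≤ s) (v : X → ℝ) : excess B T (s • v) = s * excess B T v := by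
  have hlin : matApplyReal T (s • v) = s • matApplyReal T v :=
    funext fun x => dotProduct_smul s (T x) v
  have hind : ∀ x, Bᶜ.indicator (s • matApplyReal T v) x = s * Bᶜ.indicator (matApplyReal T v) x :=
    Set.indicator_const_smul_apply Bᶜ s (matApplyReal T v)
  simp only [excess, hlin, hind, Finset.mul_sum, mul_max_of_nonneg _ _ hs, mul_sub, mul_zero,
    Pi.smul_apply, smul_eq_mul]

lemma excess_le_card {v : X → ℝ} (hv : v ≤ hitStep B (matApplyReal T) v) :
    excess B T v ≤ Fintype.card X := by
  have hle : ∀ x ∈ Finset.univ, max (v x - Bᶜ.indicator (matApplyReal T v) x) 0 ≤ 1 := by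
    intro x _
    have hvx := hv x
    by_cases hx : x ∈ B
    · rw [hitStep_of_mem hx] at hvx
      simp [hx, hvx.trans zero_le_one]
    · rw [hitStep_of_notMem hx] at hvx
      simp [hx, hvx]
  simpa [excess] using Finset.sum_le_card_nsmul _ _ _ hle

lemma IsUnavoidable.excess_pos (hB : IsUnavoidable T B) (hT : IsTransMat T) {v : X → ℝ} {x : X}
    (hx : 0 < v x) : 0 < excess B T v := by
  refine (Finset.sum_nonneg fun _ _ => le_max_right _ _).lt_of_ne fun h0 => ?_
  refine (hB.nonpos hT (v := v) (fun y => ?_) x).not_gt hx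
  have hy := (Finset.sum_eq_zero_iff_of_nonneg fun _ _ => le_max_right _ _).1 h0.symm y
    (Finset.mem_univ y)
  exact sub_nonpos.1 (max_eq_right_iff.1 hy)

lemma exists_forall_le_excess (hc : IsCompact 𝒯) (hmem : ∀ T ∈ 𝒯, IsTransMat T)
    (hB : ∀ T ∈ 𝒯, IsUnavoidable T B) :
    ∃ ε > 0, ∀ T ∈ 𝒯, ∀ u ∈ stdSimplex ℝ X, ε ≤ excess B T u := by
  have hpos : ∀ p ∈ stdSimplex ℝ X ×ˢ 𝒯, 0 < excess B p.2 p.1 := by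
    rintro ⟨u, T⟩ ⟨hu, hT⟩
    obtain ⟨x, -, hx⟩ := Finset.exists_lt_of_sum_lt (f := 0) (g := u) (s := Finset.univ)
      (by simp [hu.2])
    exact (hB T hT).excess_pos (hmem T hT) hx
  obtain ⟨ε, hε, hle⟩ := ((isCompact_stdSimplex ℝ X).prod hc).exists_forall_le'
    (continuous_excess B).continuousOn hpos
  exact ⟨ε, hε, fun T hT u hu => hle (u, T) ⟨hu, hT⟩⟩

lemma exists_bound_of_le_hitStep (hc : IsCompact 𝒯) (hmem : ∀ T ∈ 𝒯, IsTransMat T)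
    (hB : ∀ T ∈ 𝒯, IsUnavoidable T B) :
    ∃ M, ∀ T ∈ 𝒯, ∀ v : X → ℝ, 0 ≤ v → v ≤ hitStep B (matApplyReal T) v → ∀ x, v x ≤ M := by
  obtain ⟨ε, hε, hle⟩ := exists_forall_le_excess hc hmem hB
  refine ⟨Fintype.card X / ε, fun T hT v hv0 hv x => ?_⟩
  set s := ∑ y, v y
  have hxs : v x ≤ s := Finset.single_le_sum (fun y _ => hv0 y) (Finset.mem_univ x)
  refine hxs.trans ((le_div_iff₀ hε).2 ?_)
  have hs0 : 0 ≤ s := Finset.sum_nonneg fun y _ => hv0 y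
  rcases hs0.eq_or_lt' with hs | hs
  · rw [hs, zero_mul]
    positivity
  have hu : s⁻¹ • v ∈ stdSimplex ℝ X :=
    ⟨fun y => mul_nonneg (inv_nonneg.2 hs.le) (hv0 y),
      (Finset.mul_sum _ _ _).symm.trans (inv_mul_cancel₀ hs.ne')⟩
  calc s * ε ≤ s * excess B T (s⁻¹ • v) := mul_le_mul_of_nonneg_left (hle T hT _ hu) hs.le
    _ = excess B T v := by rw [← excess_smul hs.le, smul_inv_smul₀ hs.ne']
    _ ≤ Fintype.card X := excess_le_card hv

end MaximumPrinciple

section UnavoidableTarget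

variable [Fintype X] {𝒯 : Set (X → X → ℝ)} {T : X → X → ℝ} {B : Set X} {f : X → ℝ}

lemma exists_tendsto_hitIter_upperOpReal (hc : IsCompact 𝒯) (hne : 𝒯.Nonempty)
    (hsep : HasSepRows 𝒯) (hmem : ∀ T ∈ 𝒯, IsTransMat T) (hB : ∀ T ∈ 𝒯, IsUnavoidable T B) :
    ∃ f, Tendsto (hitIter B (upperOpReal 𝒯)) atTop (𝓝 f) := by
  have hmono := monotone_upperOpReal hc hne fun T hT => (hmem T hT).1
  have h0 := upperOpReal_zero hne
  obtain ⟨M, hM⟩ := exists_bound_of_le_hitStep hc hmem hB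
  refine exists_tendsto_hitIter hmono h0 (M := M) fun n => ?_
  obtain ⟨O, hO, hOn⟩ :=
    exists_matApplyReal_eq_upperOpReal hc hne hsep (hitIter B (upperOpReal 𝒯) n)
  refine hM O hO _ (hitIter_nonneg hmono h0 n) ?_
  rw [hitStep_congr fun x _ => congrFun hOn x, ← hitIter_succ]
  exact monotone_hitIter hmono h0 n.le_succ

lemma tendsto_hitIter_of_eqOn_upperOpReal (hc : IsCompact 𝒯) (hmem : ∀ T ∈ 𝒯, IsTransMat T)
    (hf : Tendsto (hitIter B (upperOpReal 𝒯)) atTop (𝓝 f)) (hT : T ∈ 𝒯)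
    (hB : IsUnavoidable T B) (hTf : Set.EqOn (matApplyReal T f) (upperOpReal 𝒯 f) Bᶜ) :
    Tendsto (hitIter B (matApplyReal T)) atTop (𝓝 f) := by
  have hne : 𝒯.Nonempty := ⟨T, hT⟩
  have hmonoU := monotone_upperOpReal hc hne fun T hT => (hmem T hT).1
  have hmonoT := monotone_matApplyReal (hmem T hT).1
  have hUf : ∀ n, hitIter B (upperOpReal 𝒯) n ≤ f :=
    (monotone_hitIter hmonoU (upperOpReal_zero hne)).ge_of_tendsto hf
  have hTU : ∀ n, hitIter B (matApplyReal T) n ≤ hitIter B (upperOpReal 𝒯) n :=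
    hitIter_mono_left hmonoT (matApplyReal_le_upperOpReal hc hT)
  have hsub : f ≤ hitStep B (matApplyReal T) f := by
    rw [hitStep_congr hTf]
    refine le_of_tendsto' (hf.comp (tendsto_add_atTop_nat 1)) fun n => ?_
    rw [Function.comp_apply, hitIter_succ]
    exact monotone_hitStep hmonoU (hUf n)
  obtain ⟨M, hM⟩ := (Set.finite_range f).bddAbove
  obtain ⟨g, hg⟩ := exists_tendsto_hitIter hmonoT (matApplyReal_zero T)
    fun n x => ((hTU n).trans (hUf n) x).trans (hM ⟨x, rfl⟩)
  have hfix : hitStep B (matApplyReal T) g = g :=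
    isFixedPt_of_tendsto_iterate hg (continuous_hitStep (continuous_matApplyReal T)).continuousAt
  have hfg : f ≤ g := hB.le_of_le_hitStep (hmem T hT) hsub hfix.le
  have hgf : g ≤ f := le_of_tendsto_of_tendsto' hg hf hTU
  exact hfg.antisymm hgf ▸ hg

end UnavoidableTarget

section InfiniteExitTime

variable [Fintype X] {𝒯 : Set (X → X → ℝ)} {S T : X → X → ℝ} {A G K : Set X} {x y : X}

/-- From every state of `G` the chain with transition matrix `T` needs an infinite expected time to
leave `G`. This depends only on the rows of `T` at the states of `G`. -/
def HasInfiniteExitTime (T : X → X → ℝ) (G : Set X) : Prop :=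
  ∀ x ∈ G, Tendsto (fun n => hitIter Gᶜ (matApplyReal T) n x) atTop atTop

lemma hitIter_compl_le_hitIter (hT : 0 ≤ T) (hGA : G ⊆ Aᶜ) (hST : Set.EqOn S T G) (n : ℕ) :
    hitIter Gᶜ (matApplyReal S) n ≤ hitIter A (matApplyReal T) n := by
  have hmono := monotone_matApplyReal hT
  induction n with
  | zero => exact le_rfl
  | succ n ih =>
    intro x
    by_cases hx : x ∈ G
    · rw [hitIter_succ, hitIter_succ, hitStep_of_notMem (not_not_intro hx),
        hitStep_of_notMem (hGA hx)]
      simpa only [matApplyReal, hST hx] using add_le_add_right (hmono ih x) 1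
    · rw [hitIter_succ, hitStep_of_mem hx]
      exact hitIter_nonneg hmono (matApplyReal_zero T) _ x

lemma HasInfiniteExitTime.tendsto_hitIter (hS : HasInfiniteExitTime S G) (hT : 0 ≤ T)
    (hGA : G ⊆ Aᶜ) (hST : Set.EqOn S T G) (hx : x ∈ G) :
    Tendsto (fun n => hitIter A (matApplyReal T) n x) atTop atTop :=
  tendsto_atTop_mono (fun n => hitIter_compl_le_hitIter hT hGA hST n x) (hS x hx)

lemma tendsto_hitIter_of_pos (hT : 0 ≤ T) (hx : x ∉ A) (hxy : 0 < T x y)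
    (hy : Tendsto (fun n => hitIter A (matApplyReal T) n y) atTop atTop) :
    Tendsto (fun n => hitIter A (matApplyReal T) n x) atTop atTop := by
  rw [← tendsto_add_atTop_iff_nat 1]
  refine tendsto_atTop_mono (fun n => ?_) (hy.const_mul_atTop hxy)
  have hnn := hitIter_nonneg (A := A) (monotone_matApplyReal hT) (matApplyReal_zero T) n
  have hle : T x y * hitIter A (matApplyReal T) n y ≤
      matApplyReal T (hitIter A (matApplyReal T) n) x :=
    Finset.single_le_sum (f := fun z => T x z * hitIter A (matApplyReal T) n z)
      (fun z _ => mul_nonneg (hT x z) (hnn z)) (Finset.mem_univ y)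
  rw [hitIter_succ, hitStep_of_notMem hx]
  linarith

lemma IsAbsorbing.natCast_le_hitIter (hK : IsAbsorbing T K) (hT : IsTransMat T) (hKA : K ⊆ Aᶜ)
    (n : ℕ) : ∀ x ∈ K, (n : ℝ) ≤ hitIter A (matApplyReal T) n x := by
  induction n with
  | zero => exact fun x _ => Nat.cast_zero.le
  | succ n ih =>
    intro x hx
    have hrow : (n : ℝ) ≤ matApplyReal T (hitIter A (matApplyReal T) n) x :=
      calc (n : ℝ) = ∑ y, T x y * n := by rw [← Finset.sum_mul, hT.2 x, one_mul]
        _ ≤ ∑ y, T x y * hitIter A (matApplyReal T) n y := by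
          refine Finset.sum_le_sum fun y _ => ?_
          by_cases hy : y ∈ K
          · exact mul_le_mul_of_nonneg_left (ih y hy) (hT.1 x y)
          · simp [hK x hx y hy]
    rw [hitIter_succ, hitStep_of_notMem (hKA hx), Nat.cast_succ]
    linarith

lemma IsAbsorbing.tendsto_hitIter (hK : IsAbsorbing T K) (hT : IsTransMat T) (hKA : K ⊆ Aᶜ)
    (hx : x ∈ K) : Tendsto (fun n => hitIter A (matApplyReal T) n x) atTop atTop :=
  tendsto_atTop_mono (fun n => hK.natCast_le_hitIter hT hKA n x hx) tendsto_natCast_atTop_atTop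

open Classical in
lemma HasInfiniteExitTime.piecewise_insert (hS : HasInfiniteExitTime S G) (hS0 : 0 ≤ S)
    (hT0 : 0 ≤ T) (hx : x ∉ G) (hy : y ∈ G) (hxy : 0 < T x y) :
    HasInfiniteExitTime (G.piecewise S T) (insert x G) := by
  have hR0 : 0 ≤ G.piecewise S T := Set.le_piecewise (fun z _ => hS0 z) fun z _ => hT0 z
  have hG : ∀ z ∈ G, Tendsto
      (fun n => hitIter (insert x G)ᶜ (matApplyReal (G.piecewise S T)) n z) atTop atTop :=
    fun z hz => hS.tendsto_hitIter hR0 (by simp) (Set.piecewise_eqOn G S T).symm hz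
  rintro z (rfl | hz)
  · refine tendsto_hitIter_of_pos hR0 (by simp) ?_ (hG y hy)
    rwa [Set.piecewise_eq_of_notMem _ _ _ hx]
  · exact hG z hz

open Classical in
lemma HasInfiniteExitTime.piecewise_union (hS : HasInfiniteExitTime S G)
    (hR : IsTransMat (G.piecewise S T)) (hK : IsAbsorbing T K) (hGK : Disjoint G K) :
    HasInfiniteExitTime (G.piecewise S T) (G ∪ K) := by
  have hG : G ⊆ (G ∪ K)ᶜᶜ := (compl_compl (G ∪ K)).symm ▸ Set.subset_union_left
  have hKG : K ⊆ (G ∪ K)ᶜᶜ := (compl_compl (G ∪ K)).symm ▸ Set.subset_union_right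
  rintro z (hz | hz)
  · exact hS.tendsto_hitIter hR.1 hG (Set.piecewise_eqOn G S T).symm hz
  · have hKR : IsAbsorbing (G.piecewise S T) K := fun x hx y hy => by
      rw [Set.piecewise_eq_of_notMem _ _ _ (hGK.notMem_of_mem_right hx), hK x hx y hy]
    exact hKR.tendsto_hitIter hR hKG hz

lemma exists_maximal_infiniteExitTime (hmem : ∀ T ∈ 𝒯, IsTransMat T) (hne : 𝒯.Nonempty)
    (hsep : HasSepRows 𝒯) (A : Set X) :
    ∃ G ⊆ Aᶜ, (∃ S ∈ 𝒯, HasInfiniteExitTime S G) ∧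
      (∀ T ∈ 𝒯, ∀ x ∈ (A ∪ G)ᶜ, ∀ y ∈ G, T x y = 0) ∧ ∀ T ∈ 𝒯, IsUnavoidable T (A ∪ G) := by
  classical
  obtain ⟨T₀, hT₀⟩ := hne
  obtain ⟨G, ⟨hGA, S, hS, hSG⟩, hmax⟩ :=
    (Set.toFinite {G : Set X | G ⊆ Aᶜ ∧ ∃ S ∈ 𝒯, HasInfiniteExitTime S G}).exists_maximal
      ⟨∅, Set.empty_subset _, T₀, hT₀, fun _ => False.elim⟩
  refine ⟨G, hGA, ⟨S, hS, hSG⟩, fun T hT x hx y hy => ?_, fun T hT K hKne hK => ?_⟩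
  · obtain ⟨hxA, hxG⟩ := not_or.1 hx
    by_contra hxy
    have hins := hSG.piecewise_insert (hmem S hS).1 (hmem T hT).1 hxG hy
      (((hmem T hT).1 x y).lt_of_ne' hxy)
    exact hxG (hmax ⟨Set.insert_subset hxA hGA, _, hsep.piecewise_mem G hS hT, hins⟩
      (Set.subset_insert x G) (Set.mem_insert x G))
  · by_contra hdisj
    rw [Set.not_nonempty_iff_eq_empty, ← Set.disjoint_iff_inter_eq_empty,
      Set.disjoint_union_right] at hdisj
    have hR := hsep.piecewise_mem G hS hT
    have hunion := hSG.piecewise_union (hmem _ hR) hK hdisj.2.symm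
    obtain ⟨k, hk⟩ := hKne
    exact hdisj.2.notMem_of_mem_left hk
      (hmax ⟨Set.union_subset hGA hdisj.1.subset_compl_right, _, hR, hunion⟩
        Set.subset_union_left (Or.inr hk))

end InfiniteExitTime

theorem upper_hitting_time_attained_general [Fintype X] (𝒯 : Set (X → X → ℝ))
    (hmem : ∀ T ∈ 𝒯, IsTransMat T) (hne : 𝒯.Nonempty) (hcl : IsClosed 𝒯)
    (hsep : HasSepRows 𝒯) (A : Set X) :
    ∃ hupStar : X → EReal,
      (∀ x, Tendsto (fun n => hupIter 𝒯 A n x) atTop (𝓝 (hupStar x))) ∧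
      ∃ T ∈ 𝒯, ∀ x, Tendsto (fun n => hPrecIter T A n x) atTop (𝓝 (hupStar x)) := by
  classical
  have hc := isCompact_of_isTransMat hcl hmem
  obtain ⟨G, hGA, ⟨S, hS, hSG⟩, hzero, hunav⟩ := exists_maximal_infiniteExitTime hmem hne hsep A
  obtain ⟨f, hf⟩ := exists_tendsto_hitIter_upperOpReal hc hne hsep hmem hunav
  obtain ⟨O, hO, hOf⟩ := exists_matApplyReal_eq_upperOpReal hc hne hsep f
  obtain ⟨T, hT, hST, hTO⟩ : ∃ T ∈ 𝒯, Set.EqOn S T G ∧ Set.EqOn T O Gᶜ :=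
    ⟨_, hsep.piecewise_mem G hS hO, (Set.piecewise_eqOn G S O).symm, Set.piecewise_eqOn_compl G S O⟩
  have hTf : Set.EqOn (matApplyReal T f) (upperOpReal 𝒯 f) (A ∪ G)ᶜ := fun x hx => by
    rw [← hOf, matApplyReal, hTO (not_or.1 hx).2, matApplyReal]
  have hfT := tendsto_hitIter_of_eqOn_upperOpReal hc hmem hf hT (hunav T hT) hTf
  have hTtop : ∀ x ∈ G, Tendsto (fun n => hitIter A (matApplyReal T) n x) atTop atTop :=
    fun x hx => hSG.tendsto_hitIter (hmem T hT).1 hGA hST hx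
  have hUtop : ∀ x ∈ G, Tendsto (fun n => hitIter A (upperOpReal 𝒯) n x) atTop atTop :=
    fun x hx => tendsto_atTop_mono (fun n => hitIter_mono_left (monotone_matApplyReal (hmem T hT).1)
      (matApplyReal_le_upperOpReal hc hT) n x) (hTtop x hx)
  refine ⟨G.piecewise (fun _ => ⊤) (fun y => (f y : EReal)), fun x => ?_, T, hT, fun x => ?_⟩
  · simp only [hupIter_eq_coe_hitIter hc hne]
    exact (tendsto_coe_hitIter_piecewise_top (fun _ _ => eqOn_upperOpReal hzero) hf hUtop x).comp
      (tendsto_add_atTop_nat 1)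
  · simp only [hPrecIter_eq_coe_hitIter]
    exact (tendsto_coe_hitIter_piecewise_top (fun _ _ => eqOn_matApplyReal (hzero T hT)) hfT hTtop
      x).comp (tendsto_add_atTop_nat 1)

/-- The upper expected hitting time of the imprecise Markov chain is attained by a single
homogeneous (precise) transition matrix compatible with `𝒯`. -/
theorem upper_hitting_time_attained [Fintype X] [Nonempty X]
    (𝒯 : Set (X → X → ℝ))
    (hmem : ∀ T ∈ 𝒯, IsTransMat T) (hne : 𝒯.Nonempty) (hcl : IsClosed 𝒯)
    (hcv : Convex ℝ 𝒯) (hsep : HasSepRows 𝒯) (A : Set X) :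
    ∃ hupStar : X → EReal,
      (∀ x, Tendsto (fun n => hupIter 𝒯 A n x) atTop (𝓝 (hupStar x))) ∧
      ∃ T ∈ 𝒯, ∀ x, Tendsto (fun n => hPrecIter T A n x) atTop (𝓝 (hupStar x)) := by
  exact upper_hitting_time_attained_general 𝒯 hmem hne hcl hsep A
end

section
/- Let 𝒮 be the A-inert modification of 𝒯, and let slow^n and sup^n denote the hitting-time iterates built from the lower and upper transition operators of 𝒮 by the same recursion as hlow^n and hup^n. Then slow^n = hlow^n and sup^n = hup^n for every n ≥ 0; in particular, the lower and upper expected hitting times of an imprecise Markov chain coincide with those of its A-inert modification: lim_{n→∞} slow^n = lim_{n→∞} hlow^n and lim_{n→∞} sup^n = lim_{n→∞} hup^n. -/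
/-!
The operators `L` and `U` see a set of matrices, at a state `x`, only through its rows at `x`, and
the factor `1_{Aᶜ}` discards the values of `L` and `U` on `A`. So the hitting-time iterates depend
only on the rows at the states outside `A`. There the `A`-inert modification offers the same rows as
`𝒯`: each row of `T ∈ 𝒯` is realised by the matrix that makes the states of `A` absorbing in `T`.
-/

open Filter Topology

variable {X : Type*}

/-- The `A`-inert modification of `𝒯`: all transition matrices `S` with `S x x = 1` for
every `x ∈ A`, whose rows outside `A` agree with the rows of some element of `𝒯`. -/
def inertMod [Fintype X] (𝒯 : Set (X → X → ℝ)) (A : Set X) : Set (X → X → ℝ) :=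
  {S | IsTransMat S ∧ (∀ x ∈ A, S x x = 1) ∧ ∃ T ∈ 𝒯, ∀ x ∉ A, ∀ y, S x y = T x y}
/-- The transition matrix `T` with the rows of the states in `A` replaced by those of the identity
matrix, so that the states in `A` become absorbing. It is the canonical member of the `A`-inert
modification obtained from `T`. -/
def inertMat [DecidableEq X] (A : Set X) [DecidablePred (· ∈ A)] (T : X → X → ℝ) : X → X → ℝ :=
  A.piecewise (fun x => Pi.single x 1) T

section InertMat

variable [DecidableEq X] {A : Set X} [DecidablePred (· ∈ A)] {x : X}

theorem inertMat_of_mem (hx : x ∈ A) (T : X → X → ℝ) : inertMat A T x = Pi.single x 1 :=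
  Set.piecewise_eq_of_mem A _ T hx

theorem inertMat_of_notMem (hx : x ∉ A) (T : X → X → ℝ) : inertMat A T x = T x :=
  Set.piecewise_eq_of_notMem A _ T hx

end InertMat

theorem indE_compl_mul_congr {A : Set X} {g h : X → EReal} (hgh : ∀ x ∉ A, g x = h x) (x : X) :
    indE Aᶜ x * g x = indE Aᶜ x * h x := by
  by_cases hx : x ∈ A
  · simp only [indE, Set.indicator_of_notMem (Set.notMem_compl_iff.2 hx), zero_mul]
  · rw [hgh x hx]

section FiniteStateSpace

variable [Fintype X]

theorem isTransMat_iff_forall_mem_stdSimplex {T : X → X → ℝ} :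
    IsTransMat T ↔ ∀ x, T x ∈ stdSimplex ℝ X :=
  forall_and.symm

theorem IsTransMat.inertMat [DecidableEq X] {T : X → X → ℝ} (hT : IsTransMat T) (A : Set X)
    [DecidablePred (· ∈ A)] : IsTransMat (inertMat A T) := by
  rw [isTransMat_iff_forall_mem_stdSimplex] at hT ⊢
  intro x
  by_cases hx : x ∈ A
  · rw [inertMat_of_mem hx]
    exact single_mem_stdSimplex ℝ x
  · rw [inertMat_of_notMem hx]
    exact hT x

theorem inertMat_mem_inertMod [DecidableEq X] {𝒯 : Set (X → X → ℝ)} {T : X → X → ℝ} (hT : T ∈ 𝒯)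
    (hTrans : IsTransMat T) (A : Set X) [DecidablePred (· ∈ A)] :
    inertMat A T ∈ inertMod 𝒯 A := by
  refine ⟨hTrans.inertMat A, fun x hx => ?_, T, hT, fun x hx y => ?_⟩
  · rw [inertMat_of_mem hx, Pi.single_eq_same]
  · rw [inertMat_of_notMem hx]

theorem image_eval_inertMod {𝒯 : Set (X → X → ℝ)} (hmem : ∀ T ∈ 𝒯, IsTransMat T)
    {A : Set X} {x : X} (hx : x ∉ A) :
    Function.eval x '' inertMod 𝒯 A = Function.eval x '' 𝒯 := by
  classical
  apply Set.Subset.antisymm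
  · rintro _ ⟨S, ⟨-, -, T, hT, hST⟩, rfl⟩
    exact ⟨T, hT, funext fun y => (hST x hx y).symm⟩
  · rintro _ ⟨T, hT, rfl⟩
    exact ⟨inertMat A T, inertMat_mem_inertMod hT (hmem T hT) A, inertMat_of_notMem hx T⟩

theorem lowerOp_eq_iInf_row (𝒯 : Set (X → X → ℝ)) (f : X → EReal) (x : X) :
    lowerOp 𝒯 f x = ⨅ p ∈ Function.eval x '' 𝒯, ∑ y, (p y : EReal) * f y :=
  (iInf_image (g := fun p : X → ℝ => ∑ y, (p y : EReal) * f y)).symm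

theorem upperOp_eq_iSup_row (𝒯 : Set (X → X → ℝ)) (f : X → EReal) (x : X) :
    upperOp 𝒯 f x = ⨆ p ∈ Function.eval x '' 𝒯, ∑ y, (p y : EReal) * f y :=
  (iSup_image (g := fun p : X → ℝ => ∑ y, (p y : EReal) * f y)).symm

theorem hlowIter_congr {𝒮 𝒯 : Set (X → X → ℝ)} {A : Set X}
    (hrows : ∀ x ∉ A, Function.eval x '' 𝒮 = Function.eval x '' 𝒯) (n : ℕ) :
    hlowIter 𝒮 A n = hlowIter 𝒯 A n := by
  induction n with
  | zero => rfl
  | succ n ih =>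
    have hop : ∀ x ∉ A, lowerOp 𝒮 (hlowIter 𝒯 A n) x = lowerOp 𝒯 (hlowIter 𝒯 A n) x :=
      fun x hx => by simp only [lowerOp_eq_iInf_row, hrows x hx]
    funext x
    simp only [hlowIter, ih, indE_compl_mul_congr hop]

theorem hupIter_congr {𝒮 𝒯 : Set (X → X → ℝ)} {A : Set X}
    (hrows : ∀ x ∉ A, Function.eval x '' 𝒮 = Function.eval x '' 𝒯) (n : ℕ) :
    hupIter 𝒮 A n = hupIter 𝒯 A n := by
  induction n with
  | zero => rfl
  | succ n ih =>
    have hop : ∀ x ∉ A, upperOp 𝒮 (hupIter 𝒯 A n) x = upperOp 𝒯 (hupIter 𝒯 A n) x :=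
      fun x hx => by simp only [upperOp_eq_iSup_row, hrows x hx]
    funext x
    simp only [hupIter, ih, indE_compl_mul_congr hop]

theorem hitIter_inertMod_eq_general {𝒯 : Set (X → X → ℝ)} (hmem : ∀ T ∈ 𝒯, IsTransMat T)
    (A : Set X) :
    (∀ n, hlowIter (inertMod 𝒯 A) A n = hlowIter 𝒯 A n) ∧
    (∀ n, hupIter (inertMod 𝒯 A) A n = hupIter 𝒯 A n) ∧
    (∀ x, (⨆ n, hlowIter (inertMod 𝒯 A) A n x) = ⨆ n, hlowIter 𝒯 A n x) ∧
    (∀ x, (⨆ n, hupIter (inertMod 𝒯 A) A n x) = ⨆ n, hupIter 𝒯 A n x) := by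
  have hrows : ∀ x ∉ A, Function.eval x '' inertMod 𝒯 A = Function.eval x '' 𝒯 :=
    fun _ hx => image_eval_inertMod hmem hx
  have hlow := hlowIter_congr hrows
  have hup := hupIter_congr hrows
  exact ⟨hlow, hup, fun x => by simp only [hlow], fun x => by simp only [hup]⟩

end FiniteStateSpace

/-- The hitting-time iterates of the `A`-inert modification coincide with those of the
original model; in particular the lower and upper expected hitting times of an imprecise
Markov chain coincide with those of its `A`-inert modification. -/
theorem hitIter_inertMod_eq [Fintype X] [Nonempty X]
    (𝒯 : Set (X → X → ℝ))
    (hmem : ∀ T ∈ 𝒯, IsTransMat T) (hne : 𝒯.Nonempty) (hcl : IsClosed 𝒯)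
    (hcv : Convex ℝ 𝒯) (hsep : HasSepRows 𝒯) (A : Set X) :
    (∀ n, hlowIter (inertMod 𝒯 A) A n = hlowIter 𝒯 A n) ∧
    (∀ n, hupIter (inertMod 𝒯 A) A n = hupIter 𝒯 A n) ∧
    (∀ x, (⨆ n, hlowIter (inertMod 𝒯 A) A n x) = ⨆ n, hlowIter 𝒯 A n x) ∧
    (∀ x, (⨆ n, hupIter (inertMod 𝒯 A) A n x) = ⨆ n, hupIter 𝒯 A n x) :=
  hitIter_inertMod_eq_general hmem A
end

section
/- Define 𝒞 := {x ∈ A^c : (U^n 1_A)(x) = 0 for all n ≥ 1}, where U^n denotes the n-fold composition of the upper transition operator U. Then for every T ∈ 𝒯 and every x ∈ 𝒞 one has ∑_{y∈𝒞} T(x,y) = 1, i.e. (T 1_𝒞)(x) = 1: every transition matrix compatible with 𝒯 keeps the set 𝒞 absorbing. -/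
open Filter Topology

variable {X : Type*}

/-- The set `𝒞` of states in `Aᶜ` from which reaching `A` in any finite number of steps
has upper probability zero: `(Uⁿ 1_A)(x) = 0` for all `n ≥ 1`. -/
def badC [Fintype X] (𝒯 : Set (X → X → ℝ)) (A : Set X) : Set X :=
  {x | x ∈ Aᶜ ∧ ∀ n, 1 ≤ n → (upperOp 𝒯)^[n] (indE A) x = 0}

/-!
The upper probabilities `Uⁿ 1_A` are nonnegative, so for `x ∈ 𝒞` every term of
`∑ y, T x y * (Uⁿ 1_A) y ≤ (Uⁿ⁺¹ 1_A) x = 0` vanishes. Hence any `y` with `T x y ≠ 0` satisfies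
`(Uⁿ 1_A) y = 0` for all `n`, where `n = 0` says `y ∉ A`: the row `T x` is supported in `𝒞`.
-/

lemma ereal_coe_sum {ι : Type*} (s : Finset ι) (f : ι → ℝ) :
    ((∑ i ∈ s, f i : ℝ) : EReal) = ∑ i ∈ s, (f i : EReal) :=
  map_sum (⟨⟨Real.toEReal, EReal.coe_zero⟩, EReal.coe_add⟩ : ℝ →+ EReal) f s

lemma indE_nonneg (B : Set X) : 0 ≤ indE B :=
  Set.indicator_nonneg fun _ _ => zero_le_one

lemma indE_eq_zero_iff {B : Set X} {x : X} : indE B x = 0 ↔ x ∉ B := by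
  simp [indE]

section TransitionOperators

variable [Fintype X] {𝒯 : Set (X → X → ℝ)} {T : X → X → ℝ} {f : X → EReal} {x y : X}

lemma matApply_indE (T : X → X → ℝ) (B : Set X) (x : X) :
    matApply T (indE B) x = ((∑ y, B.indicator (T x) y : ℝ) : EReal) := by
  rw [ereal_coe_sum]
  refine Finset.sum_congr rfl fun y _ => ?_
  by_cases hy : y ∈ B <;> simp [indE, hy]

lemma matApply_nonneg (hT : 0 ≤ T x) (hf : 0 ≤ f) : 0 ≤ matApply T f x :=
  Finset.sum_nonneg fun y _ => mul_nonneg (EReal.coe_nonneg.2 (hT y)) (hf y)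

lemma matApply_eq_zero_iff (hT : 0 ≤ T x) (hf : 0 ≤ f) :
    matApply T f x = 0 ↔ ∀ y, T x y = 0 ∨ f y = 0 := by
  have hterm : ∀ y ∈ Finset.univ, 0 ≤ (T x y : EReal) * f y := fun y _ =>
    mul_nonneg (EReal.coe_nonneg.2 (hT y)) (hf y)
  simp [matApply, Finset.sum_eq_zero_iff_of_nonneg hterm]

lemma matApply_le_upperOp (hT : T ∈ 𝒯) (f : X → EReal) (x : X) :
    matApply T f x ≤ upperOp 𝒯 f x :=
  le_iSup₂ (f := fun S (_ : S ∈ 𝒯) => matApply S f x) T hT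

lemma upperOp_nonneg (hT : T ∈ 𝒯) (hT₀ : 0 ≤ T) (hf : 0 ≤ f) : 0 ≤ upperOp 𝒯 f := fun x =>
  (matApply_nonneg (hT₀ x) hf).trans (matApply_le_upperOp hT f x)

lemma iterate_upperOp_nonneg (hT : T ∈ 𝒯) (hT₀ : 0 ≤ T) (hf : 0 ≤ f) (n : ℕ) :
    0 ≤ (upperOp 𝒯)^[n] f := by
  induction n with
  | zero => exact hf
  | succ n ih =>
    rw [Function.iterate_succ_apply']
    exact upperOp_nonneg hT hT₀ ih

lemma eq_zero_of_upperOp_eq_zero (hT : T ∈ 𝒯) (hTx : 0 ≤ T x) (hf : 0 ≤ f)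
    (hfx : upperOp 𝒯 f x = 0) (hxy : T x y ≠ 0) : f y = 0 := by
  have hzero : matApply T f x = 0 :=
    le_antisymm (hfx ▸ matApply_le_upperOp hT f x) (matApply_nonneg hTx hf)
  exact ((matApply_eq_zero_iff hTx hf).1 hzero y).resolve_left hxy

end TransitionOperators

section Absorbing

variable [Fintype X] {𝒯 : Set (X → X → ℝ)} {A : Set X} {T : X → X → ℝ} {x : X}

lemma mem_badC_iff : x ∈ badC 𝒯 A ↔ ∀ n, (upperOp 𝒯)^[n] (indE A) x = 0 := by
  rw [← Nat.and_forall_add_one]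
  simp [badC, indE_eq_zero_iff, Nat.one_le_iff_ne_zero, Nat.forall_ne_zero_iff]

lemma support_subset_badC (hT : T ∈ 𝒯) (hT₀ : 0 ≤ T) (hx : x ∈ badC 𝒯 A) :
    Function.support (T x) ⊆ badC 𝒯 A := by
  intro y hxy
  refine mem_badC_iff.2 fun n => ?_
  have hstep : upperOp 𝒯 ((upperOp 𝒯)^[n] (indE A)) x = 0 := by
    simpa only [Function.iterate_succ_apply'] using mem_badC_iff.1 hx (n + 1)
  exact eq_zero_of_upperOp_eq_zero hT (hT₀ x)
    (iterate_upperOp_nonneg hT hT₀ (indE_nonneg A) n) hstep hxy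

theorem badC_absorbing_general (hT : T ∈ 𝒯) (hTm : IsTransMat T) (hx : x ∈ badC 𝒯 A) :
    (∑ y, Set.indicator (badC 𝒯 A) (T x) y) = 1 ∧
      matApply T (indE (badC 𝒯 A)) x = 1 := by
  have hsum : ∑ y, Set.indicator (badC 𝒯 A) (T x) y = 1 := by
    rw [Set.indicator_eq_self.2 (support_subset_badC hT hTm.1 hx), hTm.2 x]
  exact ⟨hsum, by rw [matApply_indE, hsum, EReal.coe_one]⟩

end Absorbing

/-- Every transition matrix compatible with `𝒯` keeps the set `𝒞` absorbing:
`∑_{y ∈ 𝒞} T(x,y) = 1`, i.e. `(T 1_𝒞)(x) = 1`, for every `x ∈ 𝒞`. -/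
theorem badC_absorbing [Fintype X] [Nonempty X]
    (𝒯 : Set (X → X → ℝ))
    (hmem : ∀ T ∈ 𝒯, IsTransMat T) (hne : 𝒯.Nonempty) (hcl : IsClosed 𝒯)
    (hcv : Convex ℝ 𝒯) (hsep : HasSepRows 𝒯) (A : Set X) :
    ∀ T ∈ 𝒯, ∀ x ∈ badC 𝒯 A,
      (∑ y, Set.indicator (badC 𝒯 A) (T x) y) = 1 ∧
      matApply T (indE (badC 𝒯 A)) x = 1 :=
  fun _ hT _ hx => badC_absorbing_general hT (hmem _ hT) hx
end
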